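/- For every dimension d ≥ 1, every L ≥ 1, and every δ ∈ (0,1) there exists a constant c > 0 with the following property: for every metric space M that admits a map f : M → ℝ^d with L⁻¹·d_M(x,y) ≤ ‖f(x) − f(y)‖ ≤ L·d_M(x,y) for all x,y ∈ M (an L-bilipschitz embedding), every finite subset C of M with at least two elements, and every real s ≥ 2, the set of (δ,s)-supported points of C in M has cardinality at most c·|C|/s. -/

import Mathlib

/-- The isolation radius of `w` in the finite set `C`: the minimal distance
from `w` to a different point of `C`. -/
noncomputable def isolationRadius {M : Type*} [MetricSpace M] (C : Set M) (w : M) : ℝ :=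
  sInf {r : ℝ | ∃ z ∈ C, z ≠ w ∧ r = dist w z}

/-- `w` is `(δ,s)`-supported in `C`: for every `p`, the set
`C ∩ (B(w, δ⁻¹ρ) \ B(p, δρ))` has at least `s` points, where `ρ` is the isolation
radius of `w` in `C` and balls are closed. -/
def IsSupported {M : Type*} [MetricSpace M] (C : Set M) (δ s : ℝ) (w : M) : Prop :=
  ∀ p : M,
    s ≤ ((C ∩ (Metric.closedBall w (δ⁻¹ * isolationRadius C w) \
        Metric.closedBall p (δ * isolationRadius C w))).ncard : ℝ)

/-- Concave comparison: sum of truncated cell sizes inside a cell. -/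
theorem bs_min_sum {ι : Type} (I : Finset ι) (a : ι → ℝ) (h0 : ∀ i ∈ I, 0 ≤ a i) (r : ℝ)
    (hr : 0 ≤ r) : min r (∑ i ∈ I, a i) ≤ ∑ i ∈ I, min r (a i) := by
  by_cases h : ∃ i ∈ I, r ≤ a i
  · obtain ⟨i, hi, hri⟩ := h
    calc min r (∑ i ∈ I, a i) ≤ r := min_le_left _ _
      _ = min r (a i) := (min_eq_left hri).symm
      _ ≤ _ := Finset.single_le_sum (f := fun i => min r (a i))
          (fun j hj => le_min hr (h0 j hj)) hi
  · push Not at h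
    rw [Finset.sum_congr rfl (fun i hi => min_eq_right (h i hi).le)]
    exact min_le_right _ _

theorem bs_min_sum_supp {ι : Type} [DecidableEq ι] (I : Finset ι) (a : ι → ℝ)
    (h0 : ∀ i ∈ I, 0 ≤ a i) (r : ℝ)
    (hr : 0 ≤ r) (hI : I.Nonempty) (hs : ∀ j ∈ I, 2 * r ≤ ∑ i ∈ I.erase j, a i) :
    2 * r ≤ ∑ i ∈ I, min r (a i) := by
  by_cases h : ∃ i ∈ I, r ≤ a i
  · obtain ⟨i, hi, hri⟩ := h
    rw [← Finset.add_sum_erase I _ hi, min_eq_left hri]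
    have := bs_min_sum (I.erase i) a (fun j hj => h0 j (Finset.mem_of_mem_erase hj)) r hr
    rw [min_eq_left (by linarith [hs i hi])] at this
    linarith
  · push Not at h
    rw [Finset.sum_congr rfl (fun i hi => min_eq_right (h i hi).le)]
    obtain ⟨j, hj⟩ := hI
    have := Finset.add_sum_erase I a hj
    linarith [hs j hj, h0 j hj]

/-- The supported cells of level `k + m` relative to level `k`. -/
noncomputable def bsSupp {α ι : Type} [DecidableEq ι] (C : Finset α) (g : ℕ → α → ι)
    (m : ℕ) (s : ℝ) (k : ℕ) : Finset ι :=
  open Classical in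
  (C.image (g (k + m))).filter fun A => ∀ p ∈ C,
    s ≤ ((C.filter fun x => g (k + m) x = A ∧ g k x ≠ g k p).card : ℝ)

/-- The truncated mass at level `k`. -/
noncomputable def bsF {α ι : Type} [DecidableEq ι] (C : Finset α) (g : ℕ → α → ι)
    (s : ℝ) (k : ℕ) : ℝ :=
  ∑ A ∈ C.image (g k), min (s / 2) ((C.filter fun x => g k x = A).card : ℝ)

theorem bsF_nonneg {α ι : Type} [DecidableEq ι] (C : Finset α) (g : ℕ → α → ι)
    (s : ℝ) (hs : 0 ≤ s) (k : ℕ) : 0 ≤ bsF C g s k :=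
  Finset.sum_nonneg fun _ _ => le_min (by positivity) (by positivity)

theorem bsF_le {α ι : Type} [DecidableEq ι] (C : Finset α) (g : ℕ → α → ι)
    (s : ℝ) (k : ℕ) : bsF C g s k ≤ C.card := by
  rw [Finset.card_eq_sum_card_image (g k) C]
  push_cast
  exact Finset.sum_le_sum fun _ _ => min_le_right _ _

theorem bs_step {α ι : Type} [DecidableEq ι] (C : Finset α) (g : ℕ → α → ι)
    (m : ℕ) (s : ℝ) (hs : 0 ≤ s) (k : ℕ)
    (hn : ∀ x y, g k x = g k y → g (k + m) x = g (k + m) y) :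
    s / 2 * (bsSupp C g m s k).card + bsF C g s (k + m) ≤ bsF C g s k := by
  classical
  have key : ∀ A ∈ C.image (g (k + m)),
      (if A ∈ bsSupp C g m s k then s / 2 else 0)
        + min (s / 2) ((C.filter fun x => g (k + m) x = A).card : ℝ)
      ≤ ∑ B ∈ (C.filter fun x => g (k + m) x = A).image (g k),
          min (s / 2) ((C.filter fun x => g k x = B).card : ℝ) := by
    intro A hA
    set D := C.filter fun x => g (k + m) x = A with hD
    have hDB : ∀ B ∈ D.image (g k), C.filter (fun x => g k x = B) = D.filter (fun x => g k x = B) := by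
      intro B hB
      obtain ⟨y, hy, rfl⟩ := Finset.mem_image.1 hB
      ext x
      simp only [hD, Finset.mem_filter] at hy ⊢
      constructor
      · rintro ⟨h1, h2⟩
        exact ⟨⟨h1, (hn _ _ h2).trans hy.2⟩, h2⟩
      · rintro ⟨⟨h1, _⟩, h2⟩
        exact ⟨h1, h2⟩
    rw [Finset.sum_congr rfl (fun B hB => by rw [hDB B hB])]
    have hcard : (D.card : ℝ) = ∑ B ∈ D.image (g k), ((D.filter fun x => g k x = B).card : ℝ) := by
      rw [Finset.card_eq_sum_card_image (g k) D]; push_cast; rfl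
    split_ifs with hsup
    · have := bs_min_sum_supp (D.image (g k)) (fun B => ((D.filter fun x => g k x = B).card : ℝ))
        (fun _ _ => by positivity) (s / 2) (by positivity) (by
          obtain ⟨y, hy, hyA⟩ := Finset.mem_image.1 hA
          exact ⟨g k y, Finset.mem_image_of_mem _ (by simp [hD, hy, hyA])⟩) (by
          intro B hB
          have hB' := hB
          obtain ⟨p, hp, rfl⟩ := Finset.mem_image.1 hB
          have h1 := (Finset.mem_filter.1 hsup).2 p (Finset.mem_filter.1 hp).1
          have h2 := Finset.add_sum_erase (D.image (g k))
            (fun B => ((D.filter fun x => g k x = B).card : ℝ)) hB'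
          have h3 := Finset.card_filter_add_card_filter_not (s := D) (fun x => g k x = g k p)
          have h4 : D.filter (fun x => ¬ g k x = g k p) =
            C.filter fun x => g (k + m) x = A ∧ g k x ≠ g k p := by
            rw [hD, Finset.filter_filter]
          rw [h4] at h3
          have h5 : ((D.filter fun x => g k x = g k p).card : ℝ) +
            ((C.filter fun x => g (k + m) x = A ∧ g k x ≠ g k p).card : ℝ) = D.card := by
            exact_mod_cast h3
          linarith)
      linarith [min_le_left (s / 2) (D.card : ℝ)]
    · rw [zero_add, hcard]
      exact bs_min_sum _ _ (fun _ _ => by positivity) _ (by positivity)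
  have h1 := Finset.sum_le_sum key
  rw [Finset.sum_add_distrib] at h1
  have h2 : ∑ A ∈ C.image (g (k + m)), (if A ∈ bsSupp C g m s k then s / 2 else 0)
      = s / 2 * (bsSupp C g m s k).card := by
    rw [← Finset.sum_filter, Finset.sum_const, nsmul_eq_mul, mul_comm]
    congr 3
    ext A
    simp only [Finset.mem_filter, bsSupp]
    tauto
  have h3 : ∑ A ∈ C.image (g (k + m)), ∑ B ∈ (C.filter fun x => g (k + m) x = A).image (g k),
          min (s / 2) ((C.filter fun x => g k x = B).card : ℝ) = bsF C g s k := by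
    rw [← Finset.sum_biUnion]
    · unfold bsF
      apply Finset.sum_congr _ (fun _ _ => rfl)
      ext B
      simp only [Finset.mem_biUnion, Finset.mem_image, Finset.mem_filter]
      constructor
      · rintro ⟨_, _, x, hx, rfl⟩
        exact ⟨x, hx.1, rfl⟩
      · rintro ⟨x, hx, rfl⟩
        exact ⟨_, ⟨x, hx, rfl⟩, x, ⟨hx, rfl⟩, rfl⟩
    · intro A _ A' _ hne
      rw [Function.onFun, Finset.disjoint_left]
      intro B hB hB'
      obtain ⟨x, hx, rfl⟩ := Finset.mem_image.1 hB
      obtain ⟨y, hy, hxy⟩ := Finset.mem_image.1 hB'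
      apply hne
      rw [← (Finset.mem_filter.1 hx).2, ← (Finset.mem_filter.1 hy).2]
      exact (hn _ _ hxy).symm
  rw [h2, h3] at h1
  exact h1

theorem bs_count {α ι : Type} [DecidableEq ι] (C : Finset α) (g : ℕ → α → ι)
    (m : ℕ) (s : ℝ) (hs : 0 ≤ s)
    (hn : ∀ k x y, g k x = g k y → g (k + m) x = g (k + m) y) (T : ℕ) :
    s / 2 * ∑ k ∈ Finset.range T, ((bsSupp C g m s k).card : ℝ) ≤ m * C.card := by
  have h1 := Finset.sum_le_sum fun k (_ : k ∈ Finset.range T) => bs_step C g m s hs k (hn k)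
  rw [Finset.sum_add_distrib, ← Finset.mul_sum] at h1
  have h2 := Finset.sum_range_add (bsF C g s) T m
  have h3 := Finset.sum_range_add (bsF C g s) m T
  rw [add_comm m T] at h3
  have h4 : ∑ k ∈ Finset.range m, bsF C g s k ≤ m * C.card := by
    have := Finset.sum_le_sum fun k (_ : k ∈ Finset.range m) => bsF_le C g s k
    simpa using this
  have h5 : 0 ≤ ∑ k ∈ Finset.range m, bsF C g s (T + k) :=
    Finset.sum_nonneg fun _ _ => bsF_nonneg C g s hs _
  simp only [add_comm m] at h3
  linarith

/-- shift -/
noncomputable def bsTau (b : Bool) : ℝ := if b then 1 / 2 else 0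

theorem bs_floor (m : ℕ) (b : Bool) : ∃ c : ℤ, ∀ v : ℝ,
    ⌊v / 3 ^ m - bsTau b⌋ = (⌊v - bsTau b⌋ - c) / (3 ^ m : ℤ) := by
  obtain ⟨j, hj⟩ : Odd (3 ^ m : ℤ) := Odd.pow (by decide)
  have hj' : (3 ^ m : ℝ) = 2 * j + 1 := by exact_mod_cast hj
  have hpos : (0 : ℝ) < 3 ^ m := by positivity
  refine ⟨if b then j else 0, fun v => ?_⟩
  have h : ∀ z : ℤ, z = (⌊v - bsTau b⌋ - (if b then j else 0)) / (3 ^ m : ℤ) ↔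
      (z * 3 ^ m ≤ (⌊v - bsTau b⌋ - (if b then j else 0)) ∧
      (⌊v - bsTau b⌋ - (if b then j else 0)) < (z + 1) * 3 ^ m) := by
    intro z
    rw [eq_comm, Int.ediv_eq_iff_of_pos (by positivity), add_mul, one_mul]
  rw [h, le_sub_iff_add_le, sub_lt_iff_lt_add, Int.le_floor, Int.floor_lt]
  have h1 := Int.floor_le (v / 3 ^ m - bsTau b)
  have h2 := Int.lt_floor_add_one (v / 3 ^ m - bsTau b)
  rw [le_sub_iff_add_le, le_div_iff₀ hpos] at h1
  rw [sub_lt_iff_lt_add, div_lt_iff₀ hpos] at h2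
  push_cast
  cases b <;> simp [bsTau] at h1 h2 ⊢ <;> constructor <;> nlinarith

theorem bs_shift (u : ℝ) : ∃ b : Bool, ∀ v : ℝ, |v - u| < 1 / 4 →
    ⌊v - bsTau b⌋ = ⌊u - bsTau b⌋ := by
  have h1 := Int.floor_le u
  have h2 := Int.lt_floor_add_one u
  by_cases ha : u < ⌊u⌋ + 1 / 4
  · refine ⟨true, fun v hv => ?_⟩
    rw [abs_lt] at hv
    have : ∀ x : ℝ, |x - u| < 1 / 4 → ⌊x - bsTau true⌋ = ⌊u⌋ - 1 := by
      intro x hx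
      rw [abs_lt] at hx
      rw [Int.floor_eq_iff]; push_cast; simp only [bsTau, if_true]
      constructor <;> linarith
    rw [this v (abs_lt.2 hv), this u (by simp)]
  by_cases hb : u ≤ ⌊u⌋ + 3 / 4
  · refine ⟨false, fun v hv => ?_⟩
    rw [abs_lt] at hv
    simp only [bsTau]
    simp
    rw [Int.floor_eq_iff]
    constructor <;> linarith
  · refine ⟨true, fun v hv => ?_⟩
    have : ∀ x : ℝ, |x - u| < 1 / 4 → ⌊x - bsTau true⌋ = ⌊u⌋ := by
      intro x hx
      rw [abs_lt] at hx
      rw [Int.floor_eq_iff]; simp only [bsTau, if_true]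
      constructor <;> linarith
    rw [this v hv, this u (by simp)]

/-- grid cell index of exponent `e`, shift `t` -/
noncomputable def bsCell {d : ℕ} (e : ℤ) (t : Fin d → Bool) (x : EuclideanSpace ℝ (Fin d)) :
    Fin d → ℤ := fun a => ⌊x a / 3 ^ e - bsTau (t a)⌋

theorem bsCell_rel {d : ℕ} (m : ℕ) (t : Fin d → Bool) : ∃ c : Fin d → ℤ,
    ∀ (e : ℤ) (x : EuclideanSpace ℝ (Fin d)) (a : Fin d),
      bsCell (e + m) t x a = (bsCell e t x a - c a) / (3 ^ m : ℤ) := by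
  choose c hc using fun a => bs_floor m (t a)
  refine ⟨c, fun e x a => ?_⟩
  unfold bsCell
  rw [← hc a, zpow_add₀ (by norm_num), div_div, zpow_natCast]

theorem bsCell_norm {d : ℕ} (e : ℤ) (t : Fin d → Bool) (x y : EuclideanSpace ℝ (Fin d))
    (h : bsCell e t x = bsCell e t y) : ‖x - y‖ ≤ d * 3 ^ e := by
  have hp : (0 : ℝ) < 3 ^ e := by positivity
  have hc : ∀ a, |x a - y a| ≤ 3 ^ e := by
    intro a
    have := Int.abs_sub_lt_one_of_floor_eq_floor (congrFun h a)
    have h2 : x a / 3 ^ e - bsTau (t a) - (y a / 3 ^ e - bsTau (t a)) = (x a - y a) / 3 ^ e := by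
      ring
    rw [h2, abs_div, abs_of_pos hp, div_lt_one hp] at this
    exact this.le
  rw [EuclideanSpace.norm_eq]
  apply Real.sqrt_le_iff.2 ⟨by positivity, ?_⟩
  calc ∑ i, ‖(x - y) i‖ ^ 2 ≤ ∑ i : Fin d, ((3 : ℝ) ^ e) ^ 2 := by
        apply Finset.sum_le_sum
        intro i _
        have := hc i
        simp only [PiLp.sub_apply, Real.norm_eq_abs]
        gcongr
    _ = d * (3 ^ e) ^ 2 := by simp
    _ ≤ _ := by
        rw [mul_pow]
        gcongr
        exact_mod_cast Nat.le_self_pow (by norm_num) d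

/-- packing: few level-`e` cells in a level-`e+m` cell -/
theorem bs_pack {d : ℕ} {α : Type} (m : ℕ) (t : Fin d → Bool) (e : ℤ)
    (f : α → EuclideanSpace ℝ (Fin d)) (W : Finset α) (A : Fin d → ℤ)
    (hA : ∀ w ∈ W, bsCell (e + m) t (f w) = A)
    (hinj : ∀ w ∈ W, ∀ w' ∈ W, bsCell e t (f w) = bsCell e t (f w') → w = w') :
    W.card ≤ (3 ^ m) ^ d := by
  obtain ⟨c, hc⟩ := bsCell_rel (d := d) m t
  have := Finset.card_le_card_of_injOn (s := W)
    (t := Fintype.piFinset fun a => Finset.Ico (A a * 3 ^ m + c a) (A a * 3 ^ m + c a + 3 ^ m))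
    (fun w => bsCell e t (f w)) (by
      intro w hw
      simp only [Finset.mem_coe, Fintype.mem_piFinset, Finset.mem_Ico]
      intro a
      have h1 := (hc e (f w) a).symm.trans (congrFun (hA w hw) a)
      rw [Int.ediv_eq_iff_of_pos (by positivity)] at h1
      constructor <;> linarith) (fun w hw w' hw' h => hinj w hw w' hw' h)
  have h3 : ((3 : ℤ) ^ m).toNat = 3 ^ m := by
    rw [Int.toNat_pow_of_nonneg (by norm_num)]; rfl
  simpa [h3] using this

theorem bs_iso {M : Type} [MetricSpace M] (C : Set M) (hC : C.Finite) (h2 : 2 ≤ C.ncard)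
    (w : M) : 0 < isolationRadius C w ∧
      ∀ z ∈ C, z ≠ w → isolationRadius C w ≤ dist w z := by
  have hfin : {r : ℝ | ∃ z ∈ C, z ≠ w ∧ r = dist w z}.Finite :=
    (hC.image (dist w)).subset (by rintro r ⟨z, hz, _, rfl⟩; exact ⟨z, hz, rfl⟩)
  have hne : {r : ℝ | ∃ z ∈ C, z ≠ w ∧ r = dist w z}.Nonempty := by
    obtain ⟨z, hz, hzw⟩ := Set.exists_ne_of_one_lt_ncard (by omega : 1 < C.ncard) w
    exact ⟨_, z, hz, hzw, rfl⟩
  constructor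
  · obtain ⟨z, _, hzw, h⟩ := hne.csInf_mem hfin
    unfold isolationRadius
    rw [h]
    exact dist_pos.2 hzw.symm
  · intro z hz hzw
    exact csInf_le hfin.bddBelow ⟨z, hz, hzw, rfl⟩

theorem bs_local {d : ℕ} {L δ : ℝ} (hL : 1 ≤ L) (hδ : 0 < δ) (hδ1 : δ < 1) (m : ℕ)
    (hm : 12 * L ^ 2 * d ≤ δ ^ 2 * 3 ^ m)
    {M : Type} [MetricSpace M] (f : M → EuclideanSpace ℝ (Fin d))
    (hf : ∀ x y : M, L⁻¹ * dist x y ≤ ‖f x - f y‖ ∧ ‖f x - f y‖ ≤ L * dist x y)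
    (C : Set M) (hC : C.Finite) (h2 : 2 ≤ C.ncard) (s : ℝ) (w : M) (hw : w ∈ C)
    (hsup : IsSupported C δ s w) :
    ∃ (e : ℤ) (t : Fin d → Bool),
      (∀ p : M, s ≤ (({x ∈ C | bsCell (e + m) t (f x) = bsCell (e + m) t (f w) ∧
        bsCell e t (f x) ≠ bsCell e t (f p)}).ncard : ℝ)) ∧
      ∀ w' ∈ C, bsCell e t (f w') = bsCell e t (f w) → w' = w := by
  obtain ⟨hρ, hiso⟩ := bs_iso C hC h2 w
  unfold IsSupported at hsup
  set ρ := isolationRadius C w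
  have hL0 : 0 < L := by linarith
  obtain ⟨n, hn1, hn2⟩ := exists_mem_Ico_zpow (x := 4 * (L * (δ⁻¹ * ρ))) (y := (3 : ℝ))
    (by positivity) (by norm_num)
  have hE : (0 : ℝ) < 3 ^ (n + 1) := by positivity
  choose t ht using fun a => bs_shift (f w a / 3 ^ (n + 1))
  obtain ⟨e, he⟩ : ∃ e : ℤ, n + 1 = e + m := ⟨n + 1 - m, by ring⟩
  have hsmall : ∀ x y : M, bsCell e t (f x) = bsCell e t (f y) → dist x y ≤ δ * ρ := by
    intro x y hxy
    have h1 := bsCell_norm e t _ _ hxy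
    have h3 := (hf x y).1
    have h4 : (3 : ℝ) ^ e * 3 ^ m ≤ 12 * (L * (δ⁻¹ * ρ)) := by
      rw [← zpow_natCast, ← zpow_add₀ (by norm_num), ← he, zpow_add₀ (by norm_num)]
      linarith
    have h5 : dist x y ≤ L * (d * 3 ^ e) := by
      rw [inv_mul_le_iff₀ hL0] at h3
      exact h3.trans (by gcongr)
    have h6 : L * (d * 3 ^ e) * (3 : ℝ) ^ m ≤ δ * ρ * 3 ^ m := by
      calc L * (d * 3 ^ e) * (3 : ℝ) ^ m = L * d * (3 ^ e * 3 ^ m) := by ring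
        _ ≤ L * d * (12 * (L * (δ⁻¹ * ρ))) := by gcongr
        _ = 12 * L ^ 2 * d * (δ⁻¹ * ρ) := by ring
        _ ≤ δ ^ 2 * 3 ^ m * (δ⁻¹ * ρ) := by gcongr
        _ = δ * ρ * 3 ^ m := by field_simp
    exact h5.trans (le_of_mul_le_mul_right h6 (by positivity))
  refine ⟨e, t, fun p => ?_, fun w' hw' h => ?_⟩
  · refine (hsup p).trans ?_
    have := Set.ncard_le_ncard (s := C ∩ (Metric.closedBall w (δ⁻¹ * ρ) \
        Metric.closedBall p (δ * ρ))) (t := {x ∈ C | bsCell (e + m) t (f x) = bsCell (e + m) t (f w) ∧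
        bsCell e t (f x) ≠ bsCell e t (f p)}) (by
      rintro x ⟨hx, hxw, hxp⟩
      refine ⟨hx, ?_, fun h => hxp (hsmall x p h)⟩
      rw [← he]
      ext a
      apply ht
      rw [← sub_div, abs_div, abs_of_pos hE, div_lt_iff₀ hE]
      have h1 : |f x a - f w a| ≤ ‖f x - f w‖ := by
        simpa using PiLp.norm_apply_le (f x - f w) a
      have h3 := (hf x w).2
      have h4 : L * dist x w ≤ L * (δ⁻¹ * ρ) := by
        gcongr
        exact hxw
      linarith) (hC.subset fun x hx => hx.1)
    exact_mod_cast this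
  · by_contra hne
    have h1 := hiso w' hw' hne
    have h3 := hsmall w' w h
    rw [dist_comm] at h3
    nlinarith

/-- Benjamini–Schramm lemma for metric spaces admitting an `L`-bilipschitz embedding
into `ℝ^d` (Lemma 5.1 of the paper). -/
theorem benjamini_schramm_bilipschitz :
    ∀ d : ℕ, 1 ≤ d → ∀ L : ℝ, 1 ≤ L → ∀ δ : ℝ, 0 < δ → δ < 1 →
      ∃ c : ℝ, 0 < c ∧
        ∀ (M : Type) [MetricSpace M] (f : M → EuclideanSpace ℝ (Fin d)),
          (∀ x y : M, L⁻¹ * dist x y ≤ ‖f x - f y‖ ∧ ‖f x - f y‖ ≤ L * dist x y) →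
          ∀ C : Set M, C.Finite → 2 ≤ C.ncard →
            ∀ s : ℝ, 2 ≤ s →
              (({w ∈ C | IsSupported C δ s w}).ncard : ℝ) ≤ c * C.ncard / s := by

  classical
  intro d hd L hL δ hδ hδ1
  obtain ⟨m, hm⟩ : ∃ m : ℕ, 12 * L ^ 2 * d ≤ δ ^ 2 * 3 ^ m := by
    obtain ⟨m, hm⟩ := pow_unbounded_of_one_lt (12 * L ^ 2 * d / δ ^ 2) (by norm_num : (1 : ℝ) < 3)
    exact ⟨m, by rw [div_lt_iff₀ (by positivity)] at hm; linarith⟩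
  refine ⟨2 ^ d * ((3 ^ m) ^ d * (2 * (m + 1))), by positivity, ?_⟩
  intro M _ f hf C hC h2 s hs
  have hloc : ∀ w : M, ∃ (e : ℤ) (t : Fin d → Bool), w ∈ C → IsSupported C δ s w →
      (∀ p : M, s ≤ (({x ∈ C | bsCell (e + m) t (f x) = bsCell (e + m) t (f w) ∧
        bsCell e t (f x) ≠ bsCell e t (f p)}).ncard : ℝ)) ∧
      ∀ w' ∈ C, bsCell e t (f w') = bsCell e t (f w) → w' = w := by
    intro w
    by_cases h : w ∈ C ∧ IsSupported C δ s w
    · obtain ⟨e, t, h'⟩ := bs_local hL hδ hδ1 m hm f hf C hC h2 s w h.1 h.2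
      exact ⟨e, t, fun _ _ => h'⟩
    · exact ⟨0, fun _ => true, fun h1 h3 => absurd ⟨h1, h3⟩ h⟩
  choose e t het using hloc
  lift C to Finset M using hC
  set W := C.filter fun w => IsSupported (C : Set M) δ s w with hW
  have hWC : ({w ∈ (C : Set M) | IsSupported (C : Set M) δ s w}).ncard = W.card := by
    rw [← Set.ncard_coe_finset]; congr 1; ext x; simp [hW]
  rw [hWC, Set.ncard_coe_finset]
  obtain ⟨N, hN⟩ : ∃ N : ℕ, ∀ w ∈ W, (e w).natAbs ≤ N :=
    ⟨W.sup fun w => (e w).natAbs, fun w hw => Finset.le_sup (f := fun w => (e w).natAbs) hw⟩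
  -- the grid chain
  let g : (Fin d → Bool) → ℕ → M → (Fin d → ℤ) := fun τ k x => bsCell ((k : ℤ) - N) τ (f x)
  have hg : ∀ τ k x, g τ (k + m) x = bsCell (((k : ℤ) - N) + m) τ (f x) := by
    intro τ k x
    simp only [g]
    congr 1
    push_cast
    ring
  have hnest : ∀ τ k x y, g τ k x = g τ k y → g τ (k + m) x = g τ (k + m) y := by
    intro τ k x y h
    obtain ⟨c, hc⟩ := bsCell_rel (d := d) m τ
    rw [hg, hg]
    ext a
    rw [hc, hc]
    have : bsCell ((k : ℤ) - N) τ (f x) a = bsCell ((k : ℤ) - N) τ (f y) a := congrFun h a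
    rw [this]
  have hcell : ∀ (τ : Fin d → Bool) (k : ℕ), (W.filter fun w => t w = τ ∧ e w = (k : ℤ) - N).card ≤
      (3 ^ m) ^ d * (bsSupp C (g τ) m s k).card := by
    intro τ k
    apply Finset.card_le_mul_card_image_of_maps_to (f := g τ (k + m))
    · intro w hw
      obtain ⟨hwW, rfl, hek⟩ := Finset.mem_filter.1 hw
      obtain ⟨hwC, hws⟩ := Finset.mem_filter.1 hwW
      obtain ⟨h1, -⟩ := het w hwC hws
      refine Finset.mem_filter.2 ⟨Finset.mem_image_of_mem _ hwC, fun p _ => ?_⟩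
      refine (h1 p).trans (le_of_eq ?_)
      rw [← Set.ncard_coe_finset]
      congr 2
      ext x
      simp [hg, hek, g]
    · intro A _
      apply bs_pack m τ ((k : ℤ) - N) f _ A
      · intro w hw
        rw [← hg]
        exact (Finset.mem_filter.1 hw).2
      · intro w hw w' hw' h
        obtain ⟨hw1, rfl, hek⟩ := Finset.mem_filter.1 (Finset.mem_filter.1 hw).1
        obtain ⟨hwC, hws⟩ := Finset.mem_filter.1 hw1
        have hwC' := (Finset.mem_filter.1 (Finset.mem_filter.1 (Finset.mem_filter.1 hw').1).1).1
        rw [← hek] at h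
        exact ((het w hwC hws).2 w' hwC' h.symm).symm
  have hcover : W ⊆ (Finset.univ : Finset (Fin d → Bool)).biUnion fun τ =>
      (Finset.range (2 * N + 1)).biUnion fun k =>
        W.filter fun w => t w = τ ∧ e w = (k : ℤ) - N := by
    intro w hw
    have := hN w hw
    simp only [Finset.mem_biUnion, Finset.mem_univ, true_and, Finset.mem_range, Finset.mem_filter]
    exact ⟨t w, (e w + N).toNat, by omega, hw, rfl, by omega⟩
  have hcard : W.card ≤ ∑ τ : Fin d → Bool, ∑ k ∈ Finset.range (2 * N + 1),
      (3 ^ m) ^ d * (bsSupp C (g τ) m s k).card := by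
    refine (Finset.card_le_card hcover).trans (Finset.card_biUnion_le.trans ?_)
    refine Finset.sum_le_sum fun τ _ => Finset.card_biUnion_le.trans ?_
    exact Finset.sum_le_sum fun k _ => hcell τ k
  have hcardR : (W.card : ℝ) ≤ ∑ τ : Fin d → Bool, (3 ^ m) ^ d *
      ∑ k ∈ Finset.range (2 * N + 1), ((bsSupp C (g τ) m s k).card : ℝ) := by
    simp only [Finset.mul_sum]
    exact_mod_cast hcard
  have hs0 : 0 < s := by linarith
  have hτ : ∀ τ : Fin d → Bool,
      ∑ k ∈ Finset.range (2 * N + 1), ((bsSupp C (g τ) m s k).card : ℝ) ≤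
        2 * (m + 1) * C.card / s := by
    intro τ
    have := bs_count C (g τ) m s hs0.le (hnest τ) (2 * N + 1)
    rw [le_div_iff₀ hs0]
    have : (0 : ℝ) ≤ C.card := by positivity
    linarith
  calc (W.card : ℝ) ≤ _ := hcardR
    _ ≤ ∑ τ : Fin d → Bool, (3 ^ m : ℝ) ^ d * (2 * (m + 1) * C.card / s) := by
      gcongr with τ _
      exact hτ τ
    _ = _ := by
      simp
      ring
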